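/- Let m ≥ 2 be an integer and t > 0. Then for every n ∈ ℕ and every u ∈ [−1,1]: |d_{m,n}^t(u)| ≤ e^{−(n²/2 + n(m−1))t/2} · 2^{14} · (n+m−2)^{2m+3}, and d_{m,0}^t(u) = d_{m,1}^t(u) = d_{m,2}^t(u) = d_{m,3}^t(u) = 0. -/

import Mathlib

/-- The Gegenbauer polynomials `C_l^α`, defined by the recurrence
`C_0^α(u) = 1`, `C_1^α(u) = 2αu`, and
`C_l^α(u) = (2u(l+α−1)C_{l−1}^α(u) − (l+2α−2)C_{l−2}^α(u))/l` for `l ≥ 2`. -/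
noncomputable def gegenbauer (α : ℝ) : ℕ → ℝ → ℝ
  | 0, _ => 1
  | 1, u => 2 * α * u
  | (l + 2), u =>
      (2 * u * (((l : ℝ) + 2) + α - 1) * gegenbauer α (l + 1) u
        - (((l : ℝ) + 2) + 2 * α - 2) * gegenbauer α l u) / ((l : ℝ) + 2)

/-- `c_{m,l}^t(u)`: the coefficient functions of the heat kernel expansion on `ℝP^m`,
zero for `l` odd or `l = 0`. -/
noncomputable def cmt (m : ℕ) (t : ℝ) (l : ℕ) (u : ℝ) : ℝ :=
  if l % 2 = 0 ∧ l ≠ 0 then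
    Real.exp (-((l : ℝ) * ((l : ℝ) + (m : ℝ) - 1)) * t / 2)
      * ((2 * (l : ℝ) + (m : ℝ) - 1) / ((m : ℝ) - 1))
      * gegenbauer (((m : ℝ) - 1) / 2) l u
  else 0

/-- `d_{m,n}^t(u) := Σ_{l=0}^n c_{m,l}^t(u)·c_{m,n−l}^t(u)` (Cauchy product coefficients). -/
noncomputable def dmt (m : ℕ) (t : ℝ) (n : ℕ) (u : ℝ) : ℝ :=
  ∑ l ∈ Finset.range (n + 1), cmt m t l u * cmt m t (n - l) u

/-- `h_{m,k}^t(u) := Σ_{n=0}^k d_{m,n}^t(u)·c_{m,k−n}^t(u)` (triple Cauchy product coefficients). -/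
noncomputable def hmt (m : ℕ) (t : ℝ) (k : ℕ) (u : ℝ) : ℝ :=
  ∑ n ∈ Finset.range (k + 1), dmt m t n u * cmt m t (k - n) u

/-- Coefficients of `(1-X)^{-α}`. -/
noncomputable def gcoef (α : ℝ) : ℕ → ℝ
  | 0 => 1
  | (k + 1) => (α + k) / (k + 1) * gcoef α k

lemma gcoef_nonneg (α : ℝ) (h : 0 ≤ α) (k : ℕ) : 0 ≤ gcoef α k := by
  induction k with
  | zero => simp [gcoef]
  | succ k ih => rw [gcoef]; positivity

/-- The power series `(1-zX)^{-α}`. -/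
noncomputable def gser (α : ℝ) (z : ℂ) : PowerSeries ℂ :=
  PowerSeries.mk fun k => (gcoef α k : ℂ) * z ^ k

open PowerSeries in
lemma gser_ode (α : ℝ) (z : ℂ) :
    d⁄dX ℂ (gser α z) = C z * X * d⁄dX ℂ (gser α z) + C ((α : ℂ) * z) * gser α z := by
  ext n
  have key : ∀ n : ℕ, (gcoef α (n+1) : ℂ) * (n + 1) = (α + n) * gcoef α n := by
    intro n
    have : gcoef α (n+1) * (n + 1) = (α + n) * gcoef α n := by
      rw [gcoef]
      field_simp
    exact_mod_cast this
  rcases n with _ | n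
  · have := key 0
    simp [gser, coeff_derivative, mul_assoc] at this ⊢
    linear_combination z * this
  · have h1 := key (n+1)
    rw [mul_assoc, map_add, coeff_C_mul, coeff_C_mul, coeff_succ_X_mul]
    simp only [gser, coeff_derivative, coeff_mk]
    push_cast at h1 ⊢
    linear_combination z ^ (n+1+1) * h1

open PowerSeries in
lemma gser_prod_ode (α : ℝ) (z w : ℂ) (u : ℝ) (h1 : z * w = 1) (h2 : z + w = 2 * u) :
    d⁄dX ℂ (gser α z * gser α w) + X * (X * d⁄dX ℂ (gser α z * gser α w))
      + C (2 * α : ℂ) * (X * (gser α z * gser α w))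
     = C (2 * u : ℂ) * (X * d⁄dX ℂ (gser α z * gser α w))
      + C (2 * u * α : ℂ) * (gser α z * gser α w) := by
  have e1 := gser_ode α z
  have e2 := gser_ode α w
  have hd : d⁄dX ℂ (gser α z * gser α w)
      = gser α z * d⁄dX ℂ (gser α w) + gser α w * d⁄dX ℂ (gser α z) := by
    simp [Derivation.leibniz]
  have h1' : (C z * C w : PowerSeries ℂ) = 1 := by rw [← map_mul, h1, map_one]
  have h2' : (C z + C w : PowerSeries ℂ) = C (2 * u : ℂ) := by rw [← map_add, h2]
  have h3 : (C (2 * α : ℂ) : PowerSeries ℂ) = 2 * C (α : ℂ) := by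
    rw [map_mul, map_ofNat]
  have h4 : (C (2 * u * α : ℂ) : PowerSeries ℂ) = C (2 * u : ℂ) * C (α : ℂ) := by rw [map_mul]
  rw [map_mul] at e1 e2
  rw [hd, h3, h4, ← h2']
  generalize d⁄dX ℂ (gser α z) = f' at *
  generalize d⁄dX ℂ (gser α w) = g' at *
  generalize gser α z = f at *
  generalize gser α w = g at *
  generalize (C z : PowerSeries ℂ) = Z at *
  generalize (C w : PowerSeries ℂ) = W at *
  generalize (C (α : ℂ) : PowerSeries ℂ) = A at *
  linear_combination g * (1 - W * X) * e1 + f * (1 - Z * X) * e2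
    - (X * X * (f * g' + g * f') + 2 * A * X * f * g) * h1'

open PowerSeries in
lemma gegen_coeff (α : ℝ) (z w : ℂ) (u : ℝ) (h1 : z * w = 1) (h2 : z + w = 2 * u) (l : ℕ) :
    (gegenbauer α l u : ℂ) = coeff l (gser α z * gser α w) := by
  have ode := gser_prod_ode α z w u h1 h2
  have h0 : coeff 0 (gser α z * gser α w) = 1 := by
    rw [coeff_mul]
    simp [gser, gcoef]
  induction l using Nat.strong_induction_on with
  | _ l ih =>
    rcases l with _ | _ | l
    · rw [h0]; simp [gegenbauer]
    · have := congrArg (coeff 0) ode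
      simp only [map_add, coeff_C_mul, coeff_derivative, coeff_zero_X_mul, h0] at this
      simp only [gegenbauer]
      push_cast at this ⊢
      linear_combination -this
    · have i1 := ih (l+1) (by omega)
      have i0 := ih l (by omega)
      have := congrArg (coeff (l+1)) ode
      generalize gser α z * gser α w = F at *
      have hX : coeff (l+1) (X * (X * d⁄dX ℂ F)) = l * coeff l F := by
        rw [coeff_succ_X_mul]
        rcases l with _ | l
        · simp [coeff_zero_X_mul]
        · rw [coeff_succ_X_mul, coeff_derivative]; push_cast; ring
      simp only [map_add, coeff_C_mul, hX] at this
      simp only [coeff_derivative, coeff_succ_X_mul] at this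
      rw [gegenbauer]
      have hl : ((l:ℂ) + 2) ≠ 0 := by exact_mod_cast (by omega : l + 2 ≠ 0)
      push_cast at this ⊢
      rw [i1, i0, div_eq_iff hl]
      linear_combination -this

open PowerSeries in
lemma gegen_le_one (α : ℝ) (hα : 0 ≤ α) (u : ℝ) (hu : u ∈ Set.Icc (-1 : ℝ) 1) (l : ℕ) :
    |gegenbauer α l u| ≤ gegenbauer α l 1 := by
  have hsq : 0 ≤ 1 - u ^ 2 := by nlinarith [hu.1, hu.2]
  have hs := Real.sq_sqrt hsq
  set s := Real.sqrt (1 - u ^ 2)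
  have hsc : (s : ℂ) ^ 2 = 1 - (u : ℂ) ^ 2 := by exact_mod_cast hs
  have hz : ‖(u + s * Complex.I : ℂ)‖ = 1 := by
    rw [Complex.norm_add_mul_I, hs]; simp
  have hw : ‖(u - s * Complex.I : ℂ)‖ = 1 := by
    have : (u - s * Complex.I : ℂ) = u + (-s : ℝ) * Complex.I := by push_cast; ring
    rw [this, Complex.norm_add_mul_I, neg_sq, hs]; simp
  have e := gegen_coeff α (u + s * Complex.I) (u - s * Complex.I) u
    (by linear_combination hsc - (s:ℂ)^2 * Complex.I_sq) (by ring) l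
  have e1 := gegen_coeff α 1 1 1 (by simp) (by norm_num) l
  have e1' : gegenbauer α l 1 = ∑ p ∈ Finset.HasAntidiagonal.antidiagonal l, gcoef α p.1 * gcoef α p.2 := by
    rw [coeff_mul] at e1
    simp only [gser, coeff_mk, one_pow, mul_one] at e1
    exact_mod_cast e1
  have : |gegenbauer α l u| = ‖(gegenbauer α l u : ℂ)‖ := by simp
  rw [this, e, e1', coeff_mul]
  refine (norm_sum_le _ _).trans (Finset.sum_le_sum fun p _ => ?_)
  simp only [gser, coeff_mk, norm_mul, norm_pow, hz, hw, one_pow, mul_one, Complex.norm_real,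
    Real.norm_eq_abs, abs_of_nonneg (gcoef_nonneg α hα _)]
  exact le_rfl

lemma gegen_one_rec (α : ℝ) (l : ℕ) :
    ((l : ℝ) + 1) * gegenbauer α (l + 1) 1 = (l + 2 * α) * gegenbauer α l 1 := by
  induction l with
  | zero => simp [gegenbauer]
  | succ l ih =>
    have hl : ((l:ℝ) + 2) ≠ 0 := by positivity
    have : ((l:ℝ) + 2) * gegenbauer α (l + 2) 1 = 2 * 1 * (((l : ℝ) + 2) + α - 1) * gegenbauer α (l + 1) 1
        - (((l : ℝ) + 2) + 2 * α - 2) * gegenbauer α l 1 := by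
      rw [gegenbauer]; field_simp
    push_cast
    linear_combination this + ih

lemma gegen_one (p l : ℕ) :
    gegenbauer (((p + 2 : ℕ) - 1 : ℝ) / 2) l 1 = ((l + p).choose p : ℕ) := by
  induction l with
  | zero => simp [gegenbauer]
  | succ l ih =>
    have h := gegen_one_rec (((p + 2 : ℕ) - 1 : ℝ) / 2) l
    rw [ih] at h
    have h2 : (l + 1) * ((l + 1 + p).choose p) = (l + p + 1) * (l + p).choose p := by
      have := Nat.add_one_mul_choose_eq (l + p) l
      rw [Nat.choose_symm_add, show (l + p + 1).choose (l + 1) = (l + 1 + p).choose p by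
        rw [← Nat.choose_symm_add]; congr 1; omega] at this
      linarith
    have h3 : ((l:ℝ) + 1) * ((l + 1 + p).choose p : ℕ) = (l + p + 1) * ((l + p).choose p : ℕ) := by
      exact_mod_cast h2
    have hl : ((l:ℝ) + 1) ≠ 0 := by positivity
    apply mul_left_cancel₀ hl
    rw [h, h3]; push_cast; ring

lemma cmt_bound (m : ℕ) (hm : 2 ≤ m) (t : ℝ) (l n : ℕ) (hl : l + 2 ≤ n)
    (u : ℝ) (hu : u ∈ Set.Icc (-1 : ℝ) 1) :
    |cmt m t l u| ≤ Real.exp (-((l : ℝ) * ((l : ℝ) + (m : ℝ) - 1)) * t / 2)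
      * (2 * ((n : ℝ) + m - 2) * ((n : ℝ) + m - 2) ^ m) := by
  have hm' : (2:ℝ) ≤ m := by exact_mod_cast hm
  have hl' : (l:ℝ) + 2 ≤ n := by exact_mod_cast hl
  have hl0 : (0:ℝ) ≤ l := by positivity
  have hN : (1:ℝ) ≤ (n : ℝ) + m - 2 := by linarith
  have hN0 : (0:ℝ) ≤ (n : ℝ) + m - 2 := by linarith
  unfold cmt
  split_ifs with hc
  · rw [abs_mul, abs_mul, Real.abs_exp, mul_assoc]
    apply mul_le_mul_of_nonneg_left _ (Real.exp_pos _).le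
    apply mul_le_mul _ _ (abs_nonneg _) (by positivity)
    · rw [abs_of_nonneg (div_nonneg (by linarith) (by linarith)), div_le_iff₀ (by linarith)]
      nlinarith
    · refine (gegen_le_one _ (by linarith) u hu l).trans ?_
      obtain ⟨p, rfl⟩ : ∃ p, m = p + 2 := ⟨m - 2, by omega⟩
      rw [gegen_one]
      have h1 : (((l + p).choose p : ℕ) : ℝ) ≤ ((l + p : ℕ) : ℝ) ^ p := by
        exact_mod_cast Nat.choose_le_pow _ _
      refine h1.trans ?_
      refine (pow_le_pow_left₀ (by positivity) ?_ p).trans (pow_le_pow_right₀ hN (by omega))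
      push_cast; linarith
  · simp only [abs_zero]; positivity

lemma cmt_small (m : ℕ) (t : ℝ) (l : ℕ) (hl : l < 2) (u : ℝ) : cmt m t l u = 0 := by
  unfold cmt
  rw [if_neg (by omega)]

lemma dmt_small (m : ℕ) (t : ℝ) (n : ℕ) (hn : n < 4) (u : ℝ)  : dmt m t n u = 0 := by
  unfold dmt
  refine Finset.sum_eq_zero fun l hl => ?_
  rcases lt_or_ge l 2 with h | h
  · rw [cmt_small m t l h, zero_mul]
  · rw [cmt_small m t (n - l) (by omega), mul_zero]

theorem dmt_bound (m : ℕ) (hm : 2 ≤ m) (t : ℝ) (ht : 0 < t) :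
    (∀ n : ℕ, ∀ u ∈ Set.Icc (-1 : ℝ) 1,
      |dmt m t n u| ≤ Real.exp (-(((n : ℝ)^2 / 2) + (n : ℝ) * ((m : ℝ) - 1)) * t / 2)
        * 2^14 * ((n : ℝ) + (m : ℝ) - 2)^(2 * m + 3)) ∧
    (∀ u ∈ Set.Icc (-1 : ℝ) 1,
      dmt m t 0 u = 0 ∧ dmt m t 1 u = 0 ∧ dmt m t 2 u = 0 ∧ dmt m t 3 u = 0) := by
  refine ⟨fun n u hu => ?_, fun u _ => ⟨dmt_small m t 0 (by omega) u, dmt_small m t 1 (by omega) u,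
    dmt_small m t 2 (by omega) u, dmt_small m t 3 (by omega) u⟩⟩
  have hm' : (2:ℝ) ≤ m := by exact_mod_cast hm
  have hn0 : (0:ℝ) ≤ n := by positivity
  have hN0 : (0:ℝ) ≤ (n : ℝ) + m - 2 := by linarith
  rcases lt_or_ge n 4 with h4 | h4
  · rw [dmt_small m t n h4, abs_zero]; positivity
  have h4' : (4:ℝ) ≤ n := by exact_mod_cast h4
  set E := Real.exp (-(((n : ℝ)^2 / 2) + (n : ℝ) * ((m : ℝ) - 1)) * t / 2) with hE
  have hE0 : 0 < E := Real.exp_pos _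
  set N := (n : ℝ) + m - 2 with hN
  have term : ∀ l ∈ Finset.range (n + 1),
      |cmt m t l u * cmt m t (n - l) u| ≤ E * (2 * N * N ^ m) ^ 2 := by
    intro l hl
    rw [Finset.mem_range] at hl
    rcases lt_or_ge l 2 with h | h
    · rw [cmt_small m t l h, zero_mul, abs_zero]; positivity
    rcases lt_or_ge (n - l) 2 with h' | h'
    · rw [cmt_small m t (n - l) h', mul_zero, abs_zero]; positivity
    have b1 := cmt_bound m hm t l n (by omega) u hu
    have b2 := cmt_bound m hm t (n - l) n (by omega) u hu
    rw [Nat.cast_sub (by omega : l ≤ n)] at b2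
    rw [abs_mul]
    refine (mul_le_mul b1 b2 (abs_nonneg _) (by positivity)).trans ?_
    rw [mul_mul_mul_comm, ← Real.exp_add, ← sq]
    apply mul_le_mul_of_nonneg_right _ (by positivity)
    apply Real.exp_le_exp.mpr
    nlinarith [mul_nonneg ht.le (sq_nonneg ((n:ℝ) - 2 * l))]
  have := (Finset.abs_sum_le_sum_abs _ _).trans (Finset.sum_le_sum term)
  rw [Finset.sum_const, Finset.card_range, nsmul_eq_mul] at this
  unfold dmt
  refine this.trans ?_
  have hk : (((n + 1 : ℕ) : ℝ)) ≤ 2 * N := by push_cast; linarith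
  refine (mul_le_mul_of_nonneg_right hk (by positivity)).trans ?_
  have : 2 * N * (E * (2 * N * N ^ m) ^ 2) = E * 2 ^ 3 * N ^ (2 * m + 3) := by ring
  rw [this]
  gcongr
  · norm_num
  · norm_num
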